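/- Let ψ : ℤ → (0,∞) be a function such that for every t ∈ ℤ the series ∑_{j=t}^{∞} ψ(j)⁻¹ converges and ψ(t)·∑_{j=t}^{∞} ψ(j)⁻¹ ≤ γ for some constant γ > 0. Then for any t₀ ∈ ℤ there exists a constant c̃ > 0 (one may take c̃ = γ·(∑_{j=t₀}^{∞} ψ(j)⁻¹)⁻¹) such that ψ(t) ≤ c̃·(1 + γ⁻¹)^{t - t₀} for all integers t ≤ t₀. -/

import Mathlib

/-!
Put `S t = ∑_{j ≥ t} ψ(j)⁻¹`. The hypothesis says `ψ(t)⁻¹ ≥ γ⁻¹ S t`, so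
`S t = ψ(t)⁻¹ + S (t + 1) ≥ (1 + γ⁻¹) S (t + 1)`: going backwards in time the tail sums grow at
least geometrically, and `ψ t ≤ γ / S t` decays at the same rate.
-/

section TailSum

/-- The tail sum `∑_{j ≥ t} f j` of a two-sided sequence, reindexed by `j = t + n` with `n : ℕ`.
It takes the value `0` when the series is not summable. -/
noncomputable def tailSum {M : Type*} [AddCommMonoid M] [TopologicalSpace M] (f : ℤ → M) (t : ℤ) :
    M :=
  ∑' n : ℕ, f (t + n)

theorem summable_add_natCast_iff_of_le {M : Type*} [AddCommGroup M] [TopologicalSpace M]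
    [IsTopologicalAddGroup M] {f : ℤ → M} {s t : ℤ} (hst : s ≤ t) :
    (Summable fun n : ℕ => f (s + n)) ↔ Summable fun n : ℕ => f (t + n) := by
  obtain ⟨k, rfl⟩ := Int.le.dest hst
  rw [← summable_nat_add_iff k]
  simp only [Nat.cast_add, add_assoc, add_comm (k : ℤ)]

theorem tailSum_eq_add_tailSum_succ {M : Type*} [AddCommMonoid M] [TopologicalSpace M]
    [ContinuousAdd M] [T2Space M] {f : ℤ → M} {t : ℤ}
    (hf : Summable fun n : ℕ => f (t + 1 + n)) :
    tailSum f t = f t + tailSum f (t + 1) := by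
  have hshift (n : ℕ) : t + 1 + (n : ℤ) = t + (n + 1 : ℕ) := by push_cast; ring
  simp only [hshift] at hf
  calc tailSum f t = f (t + (0 : ℕ)) + ∑' n : ℕ, f (t + (n + 1 : ℕ)) :=
        tsum_eq_zero_add' (f := fun n : ℕ => f (t + n)) hf
    _ = f t + tailSum f (t + 1) := by simp only [tailSum, hshift, Nat.cast_zero, add_zero]

end TailSum

theorem pow_mul_le_sub_natCast {R : Type*} [Semiring R] [PartialOrder R] [PosMulMono R] {u : ℤ → R}
    {q : R} {t : ℤ} (hq : 0 ≤ q) (hu : ∀ s < t, q * u (s + 1) ≤ u s) (n : ℕ) :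
    q ^ n * u t ≤ u (t - n) := by
  induction n with
  | zero => simp
  | succ n ih =>
    calc q ^ (n + 1) * u t = q * (q ^ n * u t) := by rw [pow_succ', mul_assoc]
      _ ≤ q * u (t - n) := mul_le_mul_of_nonneg_left ih hq
      _ = q * u (t - (n + 1 : ℕ) + 1) := by push_cast; ring_nf
      _ ≤ u (t - (n + 1 : ℕ)) := hu _ (by lia)

section OrderedField

variable {𝕜 : Type*} [Field 𝕜] [LinearOrder 𝕜] [IsStrictOrderedRing 𝕜] [TopologicalSpace 𝕜]
  [OrderTopology 𝕜] {f : ℤ → 𝕜} {γ : 𝕜} {t t₀ : ℤ}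

theorem one_add_inv_mul_tailSum_succ_le (hf : 0 ≤ f t) (hγ : 0 < γ)
    (hsum : Summable fun n : ℕ => f (t + 1 + n)) (hbd : tailSum f t ≤ γ * f t) :
    (1 + γ⁻¹) * tailSum f (t + 1) ≤ tailSum f t := by
  have hrec : tailSum f t = f t + tailSum f (t + 1) := tailSum_eq_add_tailSum_succ hsum
  calc (1 + γ⁻¹) * tailSum f (t + 1)
      = γ⁻¹ * tailSum f (t + 1) + tailSum f (t + 1) := by ring
    _ ≤ γ⁻¹ * tailSum f t + tailSum f (t + 1) := by gcongr; linarith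
    _ ≤ f t + tailSum f (t + 1) := by gcongr; exact (inv_mul_le_iff₀ hγ).2 hbd
    _ = tailSum f t := hrec.symm

theorem one_add_inv_zpow_mul_tailSum_le (hf : ∀ t < t₀, 0 ≤ f t) (hγ : 0 < γ)
    (hsum : Summable fun n : ℕ => f (t₀ + n)) (hbd : ∀ t < t₀, tailSum f t ≤ γ * f t)
    (ht : t ≤ t₀) :
    (1 + γ⁻¹) ^ (t₀ - t) * tailSum f t₀ ≤ tailSum f t := by
  have hstep (s : ℤ) (hs : s < t₀) : (1 + γ⁻¹) * tailSum f (s + 1) ≤ tailSum f s :=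
    one_add_inv_mul_tailSum_succ_le (hf s hs) hγ
      ((summable_add_natCast_iff_of_le hs).2 hsum) (hbd s hs)
  obtain ⟨n, rfl⟩ := Int.le.dest ht
  simpa using pow_mul_le_sub_natCast (by positivity) hstep n

theorem stmt_1_general {ψ : ℤ → 𝕜} (hψ : ∀ t, 0 < ψ t)
    (hsum : Summable fun n : ℕ => (ψ (t₀ + n))⁻¹)
    (hbd : ∀ t ≤ t₀, ψ t * tailSum (fun j => (ψ j)⁻¹) t ≤ γ) :
    0 < γ * (tailSum (fun j => (ψ j)⁻¹) t₀)⁻¹ ∧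
      ∀ t ≤ t₀, ψ t ≤ γ * (tailSum (fun j => (ψ j)⁻¹) t₀)⁻¹ * (1 + γ⁻¹) ^ (t - t₀) := by
  set S := tailSum fun j => (ψ j)⁻¹
  have hinv (t : ℤ) : 0 < (ψ t)⁻¹ := inv_pos.2 (hψ t)
  have hS : 0 < S t₀ := hsum.tsum_pos (fun n => (hinv _).le) 0 (hinv _)
  have hγ : 0 < γ := (mul_pos (hψ t₀) hS).trans_le (hbd t₀ le_rfl)
  refine ⟨by positivity, fun t ht => ?_⟩
  have hgrowth : (1 + γ⁻¹) ^ (t₀ - t) * S t₀ ≤ S t :=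
    one_add_inv_zpow_mul_tailSum_le (fun s _ => (hinv s).le) hγ hsum
      (fun s hs => (le_mul_inv_iff₀' (hψ s)).2 (hbd s hs.le)) ht
  calc ψ t ≤ γ * ((1 + γ⁻¹) ^ (t₀ - t) * S t₀)⁻¹ := by
        rw [le_mul_inv_iff₀ (by positivity)]
        exact (mul_le_mul_of_nonneg_left hgrowth (hψ t).le).trans (hbd t ht)
    _ = γ * (S t₀)⁻¹ * (1 + γ⁻¹) ^ (t - t₀) := by
        rw [mul_inv_rev, ← zpow_neg, neg_sub, mul_assoc]

end OrderedField

/-- If `ψ : ℤ → (0,∞)` satisfies, for every `t`, the convergence of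
`∑_{j=t}^{∞} ψ(j)⁻¹` (reindexed as `∑_{n∈ℕ} ψ(t+n)⁻¹`) together with the bound
`ψ(t) · ∑_{j=t}^{∞} ψ(j)⁻¹ ≤ γ`, then for any `t₀` there is `c̃ > 0` with
`ψ(t) ≤ c̃ · (1+γ⁻¹)^{t-t₀}` for all `t ≤ t₀`. -/
theorem stmt_1 (ψ : ℤ → ℝ) (hψ : ∀ t : ℤ, 0 < ψ t) (γ : ℝ) (hγ : 0 < γ)
    (hsum : ∀ t : ℤ, Summable fun n : ℕ => (ψ (t + (n : ℤ)))⁻¹)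
    (hbd : ∀ t : ℤ, ψ t * ∑' n : ℕ, (ψ (t + (n : ℤ)))⁻¹ ≤ γ)
    (t₀ : ℤ) :
    ∃ c : ℝ, 0 < c ∧ ∀ t : ℤ, t ≤ t₀ → ψ t ≤ c * (1 + γ⁻¹) ^ (t - t₀) :=
  ⟨_, stmt_1_general hψ (hsum t₀) fun t _ => hbd t⟩
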